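/- Let r ∈ [0,1), m₁, m₂ ∈ ℝ, m = m₁+m₂. Let Φ ∈ S^r(ℝ^d×ℝ^d) be real-valued, b_j ∈ S^{m_j}(ℝ^d×ℝ^d), and a_j(x,ξ) = e^{iΦ(x,ξ)} b_j(x,ξ), with a_j(x,ξ) = 0 for x outside a fixed compact set, j = 1,2. For a multi-index α and t ∈ [0,1] set v_α(ξ,ζ;t) = ζ^α ∫_{ℝ^d} a₁(y,ξ) conj((∂_ξ^α a₂)(y,ξ+tζ)) e^{−i⟨y,ζ⟩} dy. Then there is C such that |v_α(ξ,ζ;t)| ≤ C(1+|ξ|)^{m−|α|(1−r)} whenever |ζ| ≤ |ξ|/2, uniformly in t ∈ [0,1]; and for every n there is C_n such that |v_α(ξ,ζ;t)| ≤ C_n(1+|ζ|)^{−n} whenever |ζ| ≥ |ξ|/2, uniformly in t ∈ [0,1]. -/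

import Mathlib

open MeasureTheory Filter Topology

noncomputable section

/-- Dot product on `ℝ^d`. -/
def dotp {d : ℕ} (x ξ : Fin d → ℝ) : ℝ := ∑ i, x i * ξ i

/-- Directional derivative of a function between normed spaces. -/
def dirDeriv {E F : Type*} [NormedAddCommGroup E] [NormedSpace ℝ E]
    [NormedAddCommGroup F] [NormedSpace ℝ F] (v : E) (f : E → F) : E → F :=
  fun x => fderiv ℝ f x v

/-- Iterated directional derivatives along a list of directions. -/
def dirDerivList {E F : Type*} [NormedAddCommGroup E] [NormedSpace ℝ E]
    [NormedAddCommGroup F] [NormedSpace ℝ F] : List E → (E → F) → E → F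
  | [], f => f
  | v :: l, f => dirDeriv v (dirDerivList l f)

/-- Multi-index partial derivative `∂^α` with respect to a family of directions. -/
def mpderivB {n : ℕ} {E F : Type*} [NormedAddCommGroup E] [NormedSpace ℝ E]
    [NormedAddCommGroup F] [NormedSpace ℝ F] (b : Fin n → E) (α : Fin n → ℕ)
    (f : E → F) : E → F :=
  dirDerivList ((List.finRange n).flatMap fun i => List.replicate (α i) (b i)) f

/-- Multi-index partial derivative `∂^α` on `ℝ^d`. -/
def mpderiv {d : ℕ} {F : Type*} [NormedAddCommGroup F] [NormedSpace ℝ F]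
    (α : Fin d → ℕ) (f : (Fin d → ℝ) → F) : (Fin d → ℝ) → F :=
  mpderivB (fun i => Pi.single i 1) α f

/-- Order `|α|` of a multi-index. -/
def mOrder {d : ℕ} (α : Fin d → ℕ) : ℕ := ∑ i, α i

/-- Factorial `α!` of a multi-index. -/
def mFactorial {d : ℕ} (α : Fin d → ℕ) : ℕ := ∏ i, (α i).factorial

/-- Power `ζ^α`. -/
def mpow {d : ℕ} (ζ : Fin d → ℝ) (α : Fin d → ℕ) : ℝ := ∏ i, ζ i ^ α i

/-- The finset of multi-indices of order `< N`. -/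
def mIdxLt (d N : ℕ) : Finset (Fin d → ℕ) :=
  (Fintype.piFinset fun _ : Fin d => Finset.range N).filter fun α => mOrder α < N

/-- The finset of multi-indices of order `= N`. -/
def mIdxEq (d N : ℕ) : Finset (Fin d → ℕ) :=
  (Fintype.piFinset fun _ : Fin d => Finset.range (N + 1)).filter fun α => mOrder α = N

/-- Hörmander symbol class `S^m_{ρ,δ}(X × ℝ^d)`. -/
def IsSymbol {d : ℕ} (X : Set (Fin d → ℝ)) (m ρ δ : ℝ)
    (a : (Fin d → ℝ) → (Fin d → ℝ) → ℂ) : Prop :=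
  ContDiffOn ℝ (⊤ : ℕ∞) (fun q : (Fin d → ℝ) × (Fin d → ℝ) => a q.1 q.2) (X ×ˢ Set.univ) ∧
  ∀ (α β : Fin d → ℕ) (K : Set (Fin d → ℝ)), IsCompact K → K ⊆ X →
    ∃ C : ℝ, ∀ x ∈ K, ∀ ξ : Fin d → ℝ,
      ‖mpderiv β (fun y => mpderiv α (fun η => a y η) ξ) x‖ ≤
        C * (1 + ‖ξ‖) ^ (m - ρ * (mOrder α : ℝ) + δ * (mOrder β : ℝ))

/-- Hörmander amplitude class `S^m_{ρ,δ,δ}(X × X × ℝ^d)`. -/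
def IsAmplitude {d : ℕ} (X : Set (Fin d → ℝ)) (m ρ δ : ℝ)
    (a : (Fin d → ℝ) → (Fin d → ℝ) → (Fin d → ℝ) → ℂ) : Prop :=
  ContDiffOn ℝ (⊤ : ℕ∞)
    (fun q : ((Fin d → ℝ) × (Fin d → ℝ)) × (Fin d → ℝ) => a q.1.1 q.1.2 q.2)
    ((X ×ˢ X) ×ˢ Set.univ) ∧
  ∀ (α β β' : Fin d → ℕ) (K : Set (Fin d → ℝ)), IsCompact K → K ⊆ X →
    ∃ C : ℝ, ∀ x ∈ K, ∀ x' ∈ K, ∀ ξ : Fin d → ℝ,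
      ‖mpderiv β (fun y => mpderiv β' (fun y' => mpderiv α (fun η => a y y' η) ξ) x') x‖ ≤
        C * (1 + ‖ξ‖) ^ (m - ρ * (mOrder α : ℝ) + δ * ((mOrder β : ℝ) + (mOrder β' : ℝ)))

/-- `C₀^∞(X)` test functions. -/
def IsTestFun {d : ℕ} (X : Set (Fin d → ℝ)) (u : (Fin d → ℝ) → ℂ) : Prop :=
  ContDiff ℝ (⊤ : ℕ∞) u ∧ HasCompactSupport u ∧ tsupport u ⊆ X

/-- Fourier transform `(2π)^{-d/2} ∫ e^{-i⟨x,ξ⟩} u(x) dx`. -/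
def fourierHat {d : ℕ} (u : (Fin d → ℝ) → ℂ) (ξ : Fin d → ℝ) : ℂ :=
  (((2 * Real.pi) ^ (-(d : ℝ) / 2) : ℝ) : ℂ) *
    ∫ x : Fin d → ℝ, Complex.exp (-(Complex.I * (dotp x ξ : ℂ))) * u x

/-- Pseudo-differential operator with symbol `a`. -/
def Op {d : ℕ} (a : (Fin d → ℝ) → (Fin d → ℝ) → ℂ) (u : (Fin d → ℝ) → ℂ) :
    (Fin d → ℝ) → ℂ := fun x =>
  (((2 * Real.pi) ^ (-(d : ℝ) / 2) : ℝ) : ℂ) *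
    ∫ ξ : Fin d → ℝ, Complex.exp (Complex.I * (dotp x ξ : ℂ)) * a x ξ * fourierHat u ξ

/-- Pseudo-differential operator with amplitude `a` (iterated integral). -/
def OpAmp {d : ℕ} (a : (Fin d → ℝ) → (Fin d → ℝ) → (Fin d → ℝ) → ℂ)
    (u : (Fin d → ℝ) → ℂ) : (Fin d → ℝ) → ℂ := fun x =>
  (((2 * Real.pi) ^ (-(d : ℝ)) : ℝ) : ℂ) *
    ∫ ξ : Fin d → ℝ, ∫ x' : Fin d → ℝ,
      Complex.exp (Complex.I * (dotp (x - x') ξ : ℂ)) * a x x' ξ * u x'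

/-- The formal adjoint `A*` of the PDO with symbol `a`. -/
def OpAdj {d : ℕ} (a : (Fin d → ℝ) → (Fin d → ℝ) → ℂ) (u : (Fin d → ℝ) → ℂ) :
    (Fin d → ℝ) → ℂ := fun x =>
  (((2 * Real.pi) ^ (-(d : ℝ)) : ℝ) : ℂ) *
    ∫ ξ : Fin d → ℝ, ∫ x' : Fin d → ℝ,
      Complex.exp (Complex.I * (dotp (x - x') ξ : ℂ)) * (starRingEnd ℂ) (a x' ξ) * u x'

/-- Gradient of a real-valued function on `ℝ^d`. -/
def gradR {d : ℕ} (f : (Fin d → ℝ) → ℝ) (x : Fin d → ℝ) : Fin d → ℝ :=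
  fun i => fderiv ℝ f x (Pi.single i 1)

end

/-!
With `σ = ξ + tζ`, the integral is a Fourier integral in `y` at frequency `ζ` whose phase
`Φ(y, ξ) - Φ(y, σ)` has all `y`-derivatives of size `O((1 + |ξ - σ|)^r) = O((1 + |ζ|)^r)`. Each
integration by parts against `e^{-i⟨y, ζ⟩}` therefore gains a factor `(1 + |ζ|)^{-(1 - r)}`, and
since `r < 1` any power of `1 + |ζ|` can be gained. The remaining factors are symbols at `ξ` and at
`σ`; Peetre's inequality moves the second weight to `ξ` at the cost of a power of `1 + |ζ|`. As
`∂_ξ^α (e^{iΦ} b₂) = e^{iΦ} c` with `c` a symbol of order `m₂ - |α|(1 - r)`, this bounds `v_α` by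
`(1 + |ξ|)^{m - |α|(1 - r)} (1 + |ζ|)^{-s}` for all `ξ`, `ζ` and every `s`, which contains both
estimates.
-/

open Asymptotics
open scoped ContDiff

section DirectionalDerivatives

variable {ι κ E E' F G A : Type*}
  [NormedAddCommGroup E] [NormedSpace ℝ E] [NormedAddCommGroup E'] [NormedSpace ℝ E']
  [NormedAddCommGroup F] [NormedSpace ℝ F] [NormedAddCommGroup G] [NormedSpace ℝ G]
  [NormedCommRing A] [NormedAlgebra ℝ A]

lemma contDiff_dirDeriv {f : E → F} (hf : ContDiff ℝ ∞ f) (v : E) :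
    ContDiff ℝ ∞ (dirDeriv v f) :=
  (hf.fderiv_right (m := ∞) (by simp)).clm_apply contDiff_const

lemma contDiff_dirDerivList {f : E → F} (hf : ContDiff ℝ ∞ f) :
    ∀ l : List E, ContDiff ℝ ∞ (dirDerivList l f)
  | [] => hf
  | v :: l => contDiff_dirDeriv (contDiff_dirDerivList hf l) v

lemma dirDeriv_comm {f : E → F} (hf : ContDiff ℝ 2 f) (v w : E) :
    dirDeriv v (dirDeriv w f) = dirDeriv w (dirDeriv v f) := by
  have hdiff : Differentiable ℝ (fderiv ℝ f) :=
    (hf.fderiv_right (m := 1) (by norm_num)).differentiable one_ne_zero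
  have second_fderiv (a b x : E) : dirDeriv a (dirDeriv b f) x = fderiv ℝ (fderiv ℝ f) x a b := by
    change fderiv ℝ (fun y => fderiv ℝ f y b) x a = _
    rw [fderiv_clm_apply (hdiff x) (differentiableAt_const _)]
    simp
  funext x
  rw [second_fderiv, second_fderiv]
  exact (hf.contDiffAt.isSymmSndFDerivAt (by simp)).eq v w

lemma dirDerivList_perm {l l' : List E} (h : l.Perm l') {f : E → F} (hf : ContDiff ℝ ∞ f) :
    dirDerivList l f = dirDerivList l' f := by
  induction h with
  | nil => rfl
  | cons v _ ih => simp only [dirDerivList, ih]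
  | swap v w l =>
    have hl := contDiff_dirDerivList hf l
    exact dirDeriv_comm (hl.of_le (WithTop.coe_le_coe.2 (le_top : (2 : ℕ∞) ≤ ⊤))) w v
  | trans _ _ ih₁ ih₂ => exact ih₁.trans ih₂

lemma dirDerivList_append (l l' : List E) (f : E → F) :
    dirDerivList (l ++ l') f = dirDerivList l (dirDerivList l' f) := by
  induction l with
  | nil => rfl
  | cons v l ih => simp only [List.cons_append, dirDerivList, ih]

lemma dirDerivList_comp {φ : E → E'} (hφ : Differentiable ℝ φ) {e : ι → E} {e' : κ → E'}
    {j : ι → κ} (hj : ∀ i x, dirDeriv (e i) φ x = e' (j i)) {f : E' → F} (hf : ContDiff ℝ ∞ f)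
    (l : List ι) :
    dirDerivList (l.map e) (f ∘ φ) = dirDerivList ((l.map j).map e') f ∘ φ := by
  induction l with
  | nil => rfl
  | cons i l ih =>
    have hdiff := (contDiff_dirDerivList hf ((l.map j).map e')).differentiable (by simp)
    funext x
    simp only [List.map_cons, dirDerivList, ih]
    rw [dirDeriv, fderiv_comp x (hdiff _) (hφ x), ContinuousLinearMap.comp_apply]
    exact congrArg _ (hj i x)

lemma dirDeriv_add {f g : E → F} (hf : Differentiable ℝ f) (hg : Differentiable ℝ g) (v : E) :
    dirDeriv v (fun x => f x + g x) = fun x => dirDeriv v f x + dirDeriv v g x := by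
  funext x
  simp [dirDeriv, fderiv_fun_add (hf x) (hg x)]

lemma dirDeriv_clm_comp (L : F →L[ℝ] G) {f : E → F} (hf : Differentiable ℝ f) (v : E) :
    dirDeriv v (fun x => L (f x)) = fun x => L (dirDeriv v f x) := by
  funext x
  simp [dirDeriv, (L.hasFDerivAt.comp x (hf x).hasFDerivAt).fderiv, ← Function.comp_def L f]

lemma dirDeriv_mul {f g : E → A} (hf : Differentiable ℝ f) (hg : Differentiable ℝ g) (v : E) :
    dirDeriv v (fun x => f x * g x) = fun x => f x * dirDeriv v g x + dirDeriv v f x * g x := by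
  funext x
  simp [dirDeriv, fderiv_fun_mul (hf x) (hg x), mul_comm]

lemma dirDeriv_cexp_mul {ψ g : E → ℂ} (hψ : Differentiable ℝ ψ) (hg : Differentiable ℝ g)
    (v : E) :
    dirDeriv v (fun x => Complex.exp (Complex.I * ψ x) * g x) = fun x =>
      Complex.exp (Complex.I * ψ x) * (Complex.I * dirDeriv v ψ x * g x + dirDeriv v g x) := by
  have hexp (x : E) := ((hψ x).hasFDerivAt.const_mul Complex.I).cexp
  rw [dirDeriv_mul (fun x => (hexp x).differentiableAt) hg]
  funext x
  simp only [dirDeriv, (hexp x).fderiv, smul_apply, smul_eq_mul]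
  ring

lemma dirDerivList_add {f g : E → F} (hf : ContDiff ℝ ∞ f) (hg : ContDiff ℝ ∞ g) (l : List E) :
    dirDerivList l (fun x => f x + g x) = fun x => dirDerivList l f x + dirDerivList l g x := by
  induction l with
  | nil => rfl
  | cons v l ih =>
    simp only [dirDerivList, ih]
    exact dirDeriv_add ((contDiff_dirDerivList hf l).differentiable (by simp))
      ((contDiff_dirDerivList hg l).differentiable (by simp)) v

lemma dirDerivList_clm_comp (L : F →L[ℝ] G) {f : E → F} (hf : ContDiff ℝ ∞ f) (l : List E) :
    dirDerivList l (fun x => L (f x)) = fun x => L (dirDerivList l f x) := by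
  induction l with
  | nil => rfl
  | cons v l ih =>
    simp only [dirDerivList, ih]
    exact dirDeriv_clm_comp L ((contDiff_dirDerivList hf l).differentiable (by simp)) v

lemma dirDerivList_sub {f g : E → F} (hf : ContDiff ℝ ∞ f) (hg : ContDiff ℝ ∞ g) (l : List E) :
    dirDerivList l (fun x => f x - g x) = fun x => dirDerivList l f x - dirDerivList l g x := by
  have hneg := dirDerivList_clm_comp (-ContinuousLinearMap.id ℝ F) hg l
  simp only [neg_apply, ContinuousLinearMap.id_apply] at hneg
  simp only [sub_eq_add_neg, dirDerivList_add hf hg.neg, hneg]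

lemma tsupport_dirDerivList_subset (l : List E) (f : E → F) :
    tsupport (dirDerivList l f) ⊆ tsupport f := by
  induction l with
  | nil => rfl
  | cons v l ih =>
    refine (closure_mono fun x hx => ?_).trans ((tsupport_fderiv_subset ℝ).trans ih)
    contrapose! hx
    simp_all [dirDerivList, dirDeriv]

/-- The amplitude `A` in `∂_l (e^{iψ} g) = e^{iψ} A`, where `∂_l` differentiates along the list of
directions `l`. -/
noncomputable def oscAmplitude (ψ g : E → ℂ) : List E → E → ℂ
  | [] => g
  | v :: l => fun x =>
      Complex.I * dirDeriv v ψ x * oscAmplitude ψ g l x + dirDeriv v (oscAmplitude ψ g l) x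

lemma contDiff_oscAmplitude {ψ g : E → ℂ} (hψ : ContDiff ℝ ∞ ψ) (hg : ContDiff ℝ ∞ g) :
    ∀ l : List E, ContDiff ℝ ∞ (oscAmplitude ψ g l)
  | [] => hg
  | v :: l => ((contDiff_const.mul (contDiff_dirDeriv hψ v)).mul
      (contDiff_oscAmplitude hψ hg l)).add (contDiff_dirDeriv (contDiff_oscAmplitude hψ hg l) v)

lemma dirDerivList_cexp_mul {ψ g : E → ℂ} (hψ : ContDiff ℝ ∞ ψ) (hg : ContDiff ℝ ∞ g)
    (l : List E) :
    dirDerivList l (fun x => Complex.exp (Complex.I * ψ x) * g x) =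
      fun x => Complex.exp (Complex.I * ψ x) * oscAmplitude ψ g l x := by
  induction l with
  | nil => rfl
  | cons v l ih =>
    simp only [dirDerivList, ih]
    exact dirDeriv_cexp_mul (hψ.differentiable (by simp))
      ((contDiff_oscAmplitude hψ hg l).differentiable (by simp)) v

lemma support_oscAmplitude_subset {ψ g : E → ℂ} (hψ : ContDiff ℝ ∞ ψ) (hg : ContDiff ℝ ∞ g)
    (l : List E) : Function.support (oscAmplitude ψ g l) ⊆ tsupport g := fun x hx => by
  have hderiv : x ∈ tsupport (dirDerivList l fun x => Complex.exp (Complex.I * ψ x) * g x) := by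
    rw [dirDerivList_cexp_mul hψ hg]
    exact subset_tsupport _ (mul_ne_zero (Complex.exp_ne_zero _) hx)
  exact tsupport_mul_subset_right (tsupport_dirDerivList_subset _ _ hderiv)

end DirectionalDerivatives

/-- Symbol-type derivative bounds on the set `S`: `f` is smooth, `f` is `O(w)`, and every
derivative in the direction `e i` improves the bound by the factor `ρ i`. -/
structure HasDerivBounds {ι E F : Type*} [NormedAddCommGroup E] [NormedSpace ℝ E]
    [NormedAddCommGroup F] [NormedSpace ℝ F] (e : ι → E) (ρ : ι → E → ℝ) (S : Set E) (w : E → ℝ)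
    (f : E → F) : Prop where
  contDiff : ContDiff ℝ ∞ f
  isBigO : ∀ l : List ι, dirDerivList (l.map e) f =O[𝓟 S] fun x => w x * (l.map (ρ · x)).prod

namespace HasDerivBounds

variable {ι κ E E' F G A : Type*}
  [NormedAddCommGroup E] [NormedSpace ℝ E] [NormedAddCommGroup E'] [NormedSpace ℝ E']
  [NormedAddCommGroup F] [NormedSpace ℝ F] [NormedAddCommGroup G] [NormedSpace ℝ G]
  [NormedCommRing A] [NormedAlgebra ℝ A]
  {e : ι → E} {ρ : ι → E → ℝ} {S : Set E} {w w' : E → ℝ}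

lemma isBigO_self {f : E → F} (hf : HasDerivBounds e ρ S w f) : f =O[𝓟 S] w := by
  simpa [_root_.dirDerivList] using hf.isBigO []

lemma mono {f : E → F} (hf : HasDerivBounds e ρ S w f) (hw : w =O[𝓟 S] w') :
    HasDerivBounds e ρ S w' f :=
  ⟨hf.contDiff, fun l => (hf.isBigO l).trans (hw.mul (isBigO_refl _ _))⟩

lemma congr_weight {f : E → F} (hf : HasDerivBounds e ρ S w f) (hw : ∀ x, w x = w' x) :
    HasDerivBounds e ρ S w' f :=
  funext hw ▸ hf

lemma dirDerivList {f : E → F} (hf : HasDerivBounds e ρ S w f) (l : List ι) :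
    HasDerivBounds e ρ S (fun x => w x * (l.map (ρ · x)).prod) (dirDerivList (l.map e) f) where
  contDiff := contDiff_dirDerivList hf.contDiff _
  isBigO l' := by
    simpa [dirDerivList_append, mul_assoc, mul_left_comm, mul_comm] using hf.isBigO (l' ++ l)

lemma dirDeriv {f : E → F} (hf : HasDerivBounds e ρ S w f) (i : ι) :
    HasDerivBounds e ρ S (fun x => w x * ρ i x) (dirDeriv (e i) f) := by
  simpa [_root_.dirDerivList] using hf.dirDerivList [i]

lemma add {f g : E → F} (hf : HasDerivBounds e ρ S w f) (hg : HasDerivBounds e ρ S w g) :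
    HasDerivBounds e ρ S w (fun x => f x + g x) where
  contDiff := hf.contDiff.add hg.contDiff
  isBigO l := by
    rw [dirDerivList_add hf.contDiff hg.contDiff]
    exact (hf.isBigO l).add (hg.isBigO l)

lemma clm_comp {f : E → F} (L : F →L[ℝ] G) (hf : HasDerivBounds e ρ S w f) :
    HasDerivBounds e ρ S w (fun x => L (f x)) where
  contDiff := L.contDiff.comp hf.contDiff
  isBigO l := by
    rw [dirDerivList_clm_comp L hf.contDiff]
    exact (L.isBigO_comp _ _).trans (hf.isBigO l)

lemma mul {f g : E → A} (hf : HasDerivBounds e ρ S w f) (hg : HasDerivBounds e ρ S w' g) :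
    HasDerivBounds e ρ S (fun x => w x * w' x) (fun x => f x * g x) where
  contDiff := hf.contDiff.mul hg.contDiff
  isBigO l := by
    induction l using List.reverseRecOn generalizing f g w w' with
    | nil => simpa [_root_.dirDerivList] using hf.isBigO_self.mul hg.isBigO_self
    | append_singleton l i ih =>
      have hleft := ih hf (hg.dirDeriv i)
      have hright := ih (hf.dirDeriv i) hg
      rw [List.map_append, dirDerivList_append]
      simp only [List.map_cons, List.map_nil, _root_.dirDerivList]
      rw [dirDeriv_mul (hf.contDiff.differentiable (by simp))
          (hg.contDiff.differentiable (by simp)),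
        dirDerivList_add (hf.contDiff.mul (hg.dirDeriv i).contDiff)
          ((hf.dirDeriv i).contDiff.mul hg.contDiff)]
      refine IsBigO.add (hleft.congr_right fun x => ?_) (hright.congr_right fun x => ?_) <;>
      · simp only [List.map_append, List.prod_append, List.map_cons, List.map_nil,
          List.prod_singleton]
        ring

lemma comp {φ : E → E'} (hφ : ContDiff ℝ ∞ φ) {e' : κ → E'} {j : ι → κ}
    (hj : ∀ i x, _root_.dirDeriv (e i) φ x = e' (j i)) {ρ' : κ → E' → ℝ}
    (hρ : ∀ i x, ρ i x = ρ' (j i) (φ x)) {S' : Set E'} (hS : Set.MapsTo φ S S') {w₀ : E' → ℝ}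
    {f : E' → F} (hf : HasDerivBounds e' ρ' S' w₀ f) :
    HasDerivBounds e ρ S (w₀ ∘ φ) (f ∘ φ) where
  contDiff := hf.contDiff.comp hφ
  isBigO l := by
    rw [dirDerivList_comp (hφ.differentiable (by simp)) hj hf.contDiff]
    refine ((hf.isBigO (l.map j)).comp_tendsto (tendsto_principal_principal.2 hS)).congr_right ?_
    simp [Function.comp_def, hρ]

/-- Each derivative falling on `e^{iψ}` costs a factor `v`, which dominates the factors `ρ i`
gained when it falls on the amplitude. -/
lemma oscAmplitude {ψ g : E → ℂ} {v : E → ℝ} {l : List ι}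
    (hψ : ∀ i ∈ l, HasDerivBounds e ρ S v (_root_.dirDeriv (e i) ψ))
    (hρ : ∀ i ∈ l, ρ i =O[𝓟 S] v) (hg : HasDerivBounds e ρ S w g) :
    HasDerivBounds e ρ S (fun x => w x * v x ^ l.length) (oscAmplitude ψ g (l.map e)) := by
  induction l with
  | nil => simpa [_root_.oscAmplitude] using hg
  | cons i l ih =>
    have hl := ih (fun k hk => hψ k (List.mem_cons_of_mem i hk))
      (fun k hk => hρ k (List.mem_cons_of_mem i hk))
    have hphase := ((hψ i List.mem_cons_self).clm_comp
      (ContinuousLinearMap.mul ℝ ℂ Complex.I)).mul hl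
    have hampl := (hl.dirDeriv i).mono ((isBigO_refl _ _).mul (hρ i List.mem_cons_self))
    refine (hphase.congr_weight fun x => ?_).add (hampl.congr_weight fun x => ?_) <;>
      simp only [List.length_cons] <;> ring

end HasDerivBounds

section MultiIndices

variable {d : ℕ}

/-- The nondecreasing word in which the letter `i` occurs `α i` times; `mpderiv α` differentiates
along the coordinate directions spelled by this word. -/
def multiIndexWord (α : Fin d → ℕ) : List (Fin d) :=
  (List.finRange d).flatMap fun i => List.replicate (α i) i

lemma mpderiv_eq_dirDerivList {F : Type*} [NormedAddCommGroup F] [NormedSpace ℝ F]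
    (α : Fin d → ℕ) (f : (Fin d → ℝ) → F) :
    mpderiv α f = dirDerivList ((multiIndexWord α).map fun i => Pi.single i 1) f := by
  simp [mpderiv, mpderivB, multiIndexWord, List.map_flatMap]

lemma length_multiIndexWord (α : Fin d → ℕ) : (multiIndexWord α).length = mOrder α := by
  simp [multiIndexWord, mOrder, List.length_flatMap, List.sum_ofFn, ← List.ofFn_eq_map]

lemma count_multiIndexWord (α : Fin d → ℕ) (i : Fin d) : (multiIndexWord α).count i = α i := by
  simp [multiIndexWord, List.count_flatMap, List.count_replicate, Function.comp_def,
    List.sum_ofFn, ← List.ofFn_eq_map]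

lemma perm_multiIndexWord_count (l : List (Fin d)) : l.Perm (multiIndexWord (l.count ·)) :=
  List.perm_iff_count.2 fun i => (count_multiIndexWord (l.count ·) i).symm

lemma mOrder_count (l : List (Fin d)) : mOrder (l.count ·) = l.length := by
  rw [← length_multiIndexWord, (perm_multiIndexWord_count l).length_eq]

lemma exists_perm_map_inl_append_map_inr {α β : Type*} (l : List (α ⊕ β)) :
    ∃ (l₁ : List α) (l₂ : List β), l.Perm (l₁.map Sum.inl ++ l₂.map Sum.inr) := by
  induction l with
  | nil => exact ⟨[], [], .nil⟩
  | cons s l ih =>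
    obtain ⟨l₁, l₂, h⟩ := ih
    rcases s with a | b
    · exact ⟨a :: l₁, l₂, h.cons _⟩
    · exact ⟨l₁, b :: l₂, (h.cons _).trans List.perm_middle.symm⟩

end MultiIndices

section Symbols

variable {d : ℕ} {Q : Type*} [NormedAddCommGroup Q] [NormedSpace ℝ Q]

/-- The `i`-th coordinate direction of the base `ℝ^d`, in the product with a parameter space. -/
def baseDir (i : Fin d) : (Fin d → ℝ) × Q := (Pi.single i 1, 0)

/-- The coordinate directions of `ℝ^d × ℝ^d`: base directions are indexed by `Sum.inl`, frequency
directions by `Sum.inr`. -/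
def symbolDir : Fin d ⊕ Fin d → (Fin d → ℝ) × (Fin d → ℝ) :=
  Sum.elim baseDir fun i => (0, Pi.single i 1)

/-- The factor gained by a symbol of type `(1, 0)` under each coordinate derivative. -/
noncomputable def symbolGain : Fin d ⊕ Fin d → (Fin d → ℝ) × (Fin d → ℝ) → ℝ :=
  Sum.elim (fun _ _ => 1) fun _ q => (1 + ‖q.2‖)⁻¹

/-- The estimates of the class `S^m_{1,0}` over the base set `K`, for a symbol seen as a function
on `ℝ^d × ℝ^d`. -/
abbrev IsSymbolOn (K : Set (Fin d → ℝ)) (m : ℝ) (a : (Fin d → ℝ) × (Fin d → ℝ) → ℂ) : Prop :=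
  HasDerivBounds symbolDir symbolGain (K ×ˢ Set.univ) (fun q => (1 + ‖q.2‖) ^ m) a

lemma dirDeriv_prodMk_left (i : Fin d) (q : Q) (y : Fin d → ℝ) :
    dirDeriv (Pi.single i 1) (fun y => (y, q)) y = baseDir i := by
  simp [dirDeriv, baseDir, (hasFDerivAt_prodMk_left y q).fderiv]

lemma dirDeriv_prodMk_right (i : Fin d) (y η : Fin d → ℝ) :
    dirDeriv (Pi.single i 1) (fun η => (y, η)) η = symbolDir (Sum.inr i) := by
  simp [dirDeriv, symbolDir, (hasFDerivAt_prodMk_right y η).fderiv]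

lemma mpderiv_slice {F : Type*} [NormedAddCommGroup F] [NormedSpace ℝ F]
    {a : (Fin d → ℝ) × (Fin d → ℝ) → F} (ha : ContDiff ℝ ∞ a) (α : Fin d → ℕ) (y η : Fin d → ℝ) :
    mpderiv α (fun η => a (y, η)) η =
      dirDerivList (((multiIndexWord α).map Sum.inr).map symbolDir) a (y, η) := by
  rw [mpderiv_eq_dirDerivList]
  exact congrFun (dirDerivList_comp ((hasFDerivAt_prodMk_right y · |>.differentiableAt))
    (dirDeriv_prodMk_right · y) ha _) η

lemma mpderiv_mpderiv_slice {F : Type*} [NormedAddCommGroup F] [NormedSpace ℝ F]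
    {a : (Fin d → ℝ) × (Fin d → ℝ) → F} (ha : ContDiff ℝ ∞ a) (β α : Fin d → ℕ)
    (x ξ : Fin d → ℝ) :
    mpderiv β (fun y => mpderiv α (fun η => a (y, η)) ξ) x =
      dirDerivList (((multiIndexWord β).map Sum.inl ++ (multiIndexWord α).map Sum.inr).map
        symbolDir) a (x, ξ) := by
  simp only [mpderiv_slice ha]
  rw [mpderiv_eq_dirDerivList, List.map_append, dirDerivList_append]
  exact congrFun (dirDerivList_comp (j := Sum.inl)
    (hasFDerivAt_prodMk_left · ξ |>.differentiableAt) (dirDeriv_prodMk_left · ξ)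
    (contDiff_dirDerivList ha _) _) x

lemma prod_map_symbolGain (l₁ l₂ : List (Fin d)) (q : (Fin d → ℝ) × (Fin d → ℝ)) :
    ((l₁.map Sum.inl ++ l₂.map Sum.inr).map (symbolGain · q)).prod =
      (1 + ‖q.2‖)⁻¹ ^ l₂.length := by
  simp [symbolGain, Function.comp_def]

lemma IsSymbol.isSymbolOn {m : ℝ} {a : (Fin d → ℝ) → (Fin d → ℝ) → ℂ}
    (ha : IsSymbol Set.univ m 1 0 a) {K : Set (Fin d → ℝ)} (hK : IsCompact K) :
    IsSymbolOn K m fun q => a q.1 q.2 := by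
  have hsmooth : ContDiff ℝ ∞ fun q : (Fin d → ℝ) × (Fin d → ℝ) => a q.1 q.2 :=
    contDiffOn_univ.1 (by simpa only [Set.univ_prod_univ] using ha.1)
  refine ⟨hsmooth, fun l => ?_⟩
  obtain ⟨l₁, l₂, hl⟩ := exists_perm_map_inl_append_map_inr l
  obtain ⟨C, hC⟩ := ha.2 (l₂.count ·) (l₁.count ·) K hK (Set.subset_univ K)
  have hwords := hl.trans (((perm_multiIndexWord_count l₁).map Sum.inl).append
    ((perm_multiIndexWord_count l₂).map Sum.inr))
  refine .of_bound C (eventually_principal.2 fun ⟨x, ξ⟩ hx => ?_)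
  have hpos : 0 < 1 + ‖ξ‖ := by positivity
  rw [dirDerivList_perm (hwords.map _) hsmooth, ← mpderiv_mpderiv_slice hsmooth,
    (hl.map _).prod_eq, prod_map_symbolGain, Real.norm_of_nonneg (by positivity), inv_pow,
    ← Real.rpow_natCast, ← Real.rpow_neg hpos.le, ← Real.rpow_add hpos]
  simpa [mOrder_count, sub_eq_add_neg] using hC x hx.1 ξ

end Symbols

section SymbolCalculus

variable {d : ℕ} {K : Set (Fin d → ℝ)} {m r : ℝ} {Φ a b : (Fin d → ℝ) × (Fin d → ℝ) → ℂ}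

lemma IsSymbolOn.dirDeriv_inr (ha : IsSymbolOn K m a) (i : Fin d) :
    IsSymbolOn K (m - 1) (dirDeriv (symbolDir (Sum.inr i)) a) :=
  (ha.dirDeriv (Sum.inr i)).congr_weight fun q => by
    simp [symbolGain, Real.rpow_sub_one (by positivity : 1 + ‖q.2‖ ≠ 0), div_eq_mul_inv]

lemma IsSymbolOn.dirDerivList_inl (ha : IsSymbolOn K m a) (l : List (Fin d)) :
    IsSymbolOn K m (dirDerivList ((l.map Sum.inl).map symbolDir) a) :=
  (ha.dirDerivList (l.map Sum.inl)).congr_weight fun q => by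
    have := prod_map_symbolGain l [] q
    simp_all

lemma IsSymbolOn.oscAmplitude_inr (hr : 0 ≤ r) (hΦ : IsSymbolOn K r Φ) (hb : IsSymbolOn K m b)
    (l : List (Fin d)) :
    IsSymbolOn K (m - l.length * (1 - r)) (oscAmplitude Φ b ((l.map Sum.inr).map symbolDir)) := by
  have hgain (i : Fin d) :
      symbolGain (Sum.inr i) =O[𝓟 (K ×ˢ Set.univ)] fun q => (1 + ‖q.2‖) ^ (r - 1) := by
    refine .of_norm_le fun q => ?_
    rw [Real.norm_of_nonneg (by simp only [symbolGain, Sum.elim_inr]; positivity)]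
    simpa [symbolGain, Real.rpow_neg_one] using
      Real.rpow_le_rpow_of_exponent_le (x := 1 + ‖q.2‖) (by simp) (by linarith : -1 ≤ r - 1)
  refine (HasDerivBounds.oscAmplitude (List.forall_mem_map.2 fun i _ => hΦ.dirDeriv_inr i)
    (List.forall_mem_map.2 fun i _ => hgain i) hb).congr_weight fun q => ?_
  have hpos : 0 < 1 + ‖q.2‖ := by positivity
  rw [← Real.rpow_mul_natCast hpos.le, ← Real.rpow_add hpos, List.length_map]
  ring_nf

lemma IsSymbolOn.exists_norm_fderiv_slice_le (ha : IsSymbolOn K m a) :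
    ∃ C : ℝ, 0 ≤ C ∧ ∀ y ∈ K, ∀ η, ‖fderiv ℝ (fun η => a (y, η)) η‖ ≤ C * (1 + ‖η‖) ^ (m - 1) := by
  obtain ⟨B, hB, hopNorm⟩ := (Pi.basisFun ℝ (Fin d)).exists_opNorm_le (F := ℂ)
  obtain ⟨C, hC, hbound⟩ :=
    (isBigO_pi.2 fun i => (ha.dirDeriv_inr i).isBigO_self).exists_nonneg
  refine ⟨B * C, by positivity, fun y hy η => ?_⟩
  rw [mul_assoc]
  refine hopNorm (by positivity) fun i => ?_
  have hi := (isBigOWith_principal.1 hbound) (y, η) ⟨hy, Set.mem_univ η⟩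
  rw [Real.norm_of_nonneg (by positivity)] at hi
  have hslice : fderiv ℝ (fun η => a (y, η)) η (Pi.single i 1) =
      dirDeriv (symbolDir (Sum.inr i)) a (y, η) :=
    congrFun (dirDerivList_comp (hasFDerivAt_prodMk_right y · |>.differentiableAt)
      (dirDeriv_prodMk_right · y) ha.contDiff [i]) η
  rw [Pi.basisFun_apply, hslice]
  exact (norm_le_pi_norm _ i).trans hi

lemma IsSymbolOn.exists_norm_sub_le_of_near (hr : r ≤ 1) (ha : IsSymbolOn K r a) :
    ∃ C : ℝ, ∀ y ∈ K, ∀ ξ σ, 2 * ‖ξ - σ‖ ≤ ‖ξ‖ →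
      ‖a (y, ξ) - a (y, σ)‖ ≤ C * (1 + ‖ξ - σ‖) ^ r := by
  obtain ⟨C, hC, hderiv⟩ := ha.exists_norm_fderiv_slice_le
  refine ⟨C, fun y hy ξ σ hnear => ?_⟩
  have hδ : 0 < 1 + ‖ξ - σ‖ := by positivity
  have hball : ∀ η ∈ Metric.closedBall ξ ‖ξ - σ‖,
      ‖fderiv ℝ (fun η => a (y, η)) η‖ ≤ C * (1 + ‖ξ - σ‖) ^ (r - 1) := fun η hη => by
    have hη' : ‖ξ‖ - ‖η‖ ≤ ‖ξ - σ‖ :=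
      (norm_sub_norm_le ξ η).trans (by simpa [dist_eq_norm, norm_sub_rev] using hη)
    refine (hderiv y hy η).trans (mul_le_mul_of_nonneg_left ?_ hC)
    exact Real.rpow_le_rpow_of_nonpos hδ (by linarith) (by linarith)
  have hdiff : Differentiable ℝ fun η => a (y, η) := fun η =>
    (ha.contDiff.differentiable (by simp) _).comp η (hasFDerivAt_prodMk_right y η).differentiableAt
  calc ‖a (y, ξ) - a (y, σ)‖ ≤ C * (1 + ‖ξ - σ‖) ^ (r - 1) * ‖ξ - σ‖ :=
        (convex_closedBall ξ _).norm_image_sub_le_of_norm_fderiv_le (fun η _ => hdiff η) hball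
          (by simp [dist_eq_norm, norm_sub_rev]) (by simp)
    _ ≤ C * (1 + ‖ξ - σ‖) ^ (r - 1) * (1 + ‖ξ - σ‖) := by gcongr; linarith
    _ = C * (1 + ‖ξ - σ‖) ^ r := by
        rw [mul_assoc, ← Real.rpow_add_one hδ.ne', sub_add_cancel]

lemma IsSymbolOn.exists_norm_sub_le_of_far (hr : 0 ≤ r) (ha : IsSymbolOn K r a) :
    ∃ C : ℝ, ∀ y ∈ K, ∀ ξ σ, ‖ξ‖ ≤ 2 * ‖ξ - σ‖ →
      ‖a (y, ξ) - a (y, σ)‖ ≤ C * (1 + ‖ξ - σ‖) ^ r := by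
  obtain ⟨C, hC, hbound⟩ := ha.isBigO_self.exists_nonneg
  refine ⟨2 * (C * 3 ^ r), fun y hy ξ σ hfar => ?_⟩
  have hle {η : Fin d → ℝ} (hη : ‖η‖ ≤ 3 * ‖ξ - σ‖) :
      ‖a (y, η)‖ ≤ C * 3 ^ r * (1 + ‖ξ - σ‖) ^ r := by
    have h := isBigOWith_principal.1 hbound (y, η) ⟨hy, Set.mem_univ η⟩
    rw [Real.norm_of_nonneg (by positivity)] at h
    rw [mul_assoc, ← Real.mul_rpow (by norm_num) (by positivity)]
    refine h.trans ?_
    gcongr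
    linarith
  have hσ : ‖σ‖ ≤ ‖ξ‖ + ‖ξ - σ‖ := by
    linarith [norm_sub_norm_le σ ξ, norm_sub_rev ξ σ]
  linarith [norm_sub_le (a (y, ξ)) (a (y, σ)), hle (η := ξ) (by linarith [norm_nonneg (ξ - σ)]),
    hle (η := σ) (by linarith)]

/-- If `|ξ - σ| ≤ |ξ| / 2`, then `|η| ≥ |ξ - σ|` on the segment from `ξ` to `σ`, and the mean value
theorem applies; otherwise `|ξ|` and `|σ|` are both `O(|ξ - σ|)`. -/
lemma IsSymbolOn.exists_norm_sub_le (hr₀ : 0 ≤ r) (hr₁ : r ≤ 1) (ha : IsSymbolOn K r a) :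
    ∃ C : ℝ, ∀ y ∈ K, ∀ ξ σ, ‖a (y, ξ) - a (y, σ)‖ ≤ C * (1 + ‖ξ - σ‖) ^ r := by
  obtain ⟨C₁, hnear⟩ := ha.exists_norm_sub_le_of_near hr₁
  obtain ⟨C₂, hfar⟩ := ha.exists_norm_sub_le_of_far hr₀
  refine ⟨max C₁ C₂, fun y hy ξ σ => ?_⟩
  rcases le_total (2 * ‖ξ - σ‖) ‖ξ‖ with h | h
  · exact (hnear y hy ξ σ h).trans (by gcongr; exact le_max_left _ _)
  · exact (hfar y hy ξ σ h).trans (by gcongr; exact le_max_right _ _)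

end SymbolCalculus

section UniformlySmooth

variable {d : ℕ} {F Q : Type*} [NormedAddCommGroup F] [NormedSpace ℝ F]
  [NormedAddCommGroup Q] [NormedSpace ℝ Q] {K : Set (Fin d → ℝ)}

/-- Every base derivative `∂_y^β g(y, q)` is `O(w q)`, uniformly in `y ∈ K` and in the
parameter `q`. -/
abbrev IsUniformlySmoothOn (K : Set (Fin d → ℝ)) (w : Q → ℝ) (g : (Fin d → ℝ) × Q → F) : Prop :=
  HasDerivBounds baseDir (fun _ _ => 1) (K ×ˢ Set.univ) (fun x => w x.2) g

lemma dirDeriv_baseDir_prodMap (p : Q →L[ℝ] (Fin d → ℝ)) (i : Fin d) (x : (Fin d → ℝ) × Q) :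
    dirDeriv (baseDir i) ((ContinuousLinearMap.id ℝ (Fin d → ℝ)).prodMap p) x =
      symbolDir (Sum.inl i) := by
  rw [dirDeriv, ContinuousLinearMap.fderiv]
  simp [symbolDir, baseDir]

lemma IsSymbolOn.isUniformlySmoothOn {m : ℝ} {a : (Fin d → ℝ) × (Fin d → ℝ) → ℂ}
    (ha : IsSymbolOn K m a) (p : Q →L[ℝ] (Fin d → ℝ)) :
    IsUniformlySmoothOn K (fun q => (1 + ‖p q‖) ^ m) fun x => a (x.1, p x.2) :=
  HasDerivBounds.comp (ContinuousLinearMap.contDiff _) (dirDeriv_baseDir_prodMap p)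
    (S' := K ×ˢ Set.univ) (fun _ _ => rfl) (fun _ hx => ⟨hx.1, Set.mem_univ _⟩) ha

lemma IsSymbolOn.isUniformlySmoothOn_sub {r : ℝ} (hr₀ : 0 ≤ r) (hr₁ : r ≤ 1)
    {a : (Fin d → ℝ) × (Fin d → ℝ) → ℂ} (ha : IsSymbolOn K r a) (p₁ p₂ : Q →L[ℝ] (Fin d → ℝ)) :
    IsUniformlySmoothOn K (fun q => (1 + ‖p₁ q - p₂ q‖) ^ r)
      fun x => a (x.1, p₁ x.2) - a (x.1, p₂ x.2) := by
  have hsmooth (p : Q →L[ℝ] (Fin d → ℝ)) := (ha.isUniformlySmoothOn p).contDiff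
  have hderiv (p : Q →L[ℝ] (Fin d → ℝ)) (l : List (Fin d)) :=
    dirDerivList_comp (ContinuousLinearMap.differentiable _) (dirDeriv_baseDir_prodMap p)
      ha.contDiff l
  refine ⟨(hsmooth p₁).sub (hsmooth p₂), fun l => ?_⟩
  obtain ⟨C, hC⟩ := (ha.dirDerivList_inl l).exists_norm_sub_le hr₀ hr₁
  refine .of_bound C (eventually_principal.2 fun x hx => ?_)
  rw [dirDerivList_sub (hsmooth p₁) (hsmooth p₂)]
  calc _ = _ := congrArg norm (congrArg₂ _ (congrFun (hderiv p₁ l) x) (congrFun (hderiv p₂ l) x))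
    _ ≤ C * (1 + ‖p₁ x.2 - p₂ x.2‖) ^ r := hC x.1 hx.1 (p₁ x.2) (p₂ x.2)
    _ = _ := by
      simp [abs_of_nonneg (Real.rpow_nonneg (by positivity : 0 ≤ 1 + ‖p₁ x.2 - p₂ x.2‖) r)]

end UniformlySmooth

section PlaneWaves

variable {d : ℕ}

/-- The plane wave `y ↦ e^{-i⟨y, ζ⟩}`. -/
noncomputable def planeWave (ζ y : Fin d → ℝ) : ℂ := Complex.exp (-(Complex.I * (dotp y ζ : ℂ)))

lemma norm_planeWave (ζ y : Fin d → ℝ) : ‖planeWave ζ y‖ = 1 := by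
  simp [planeWave, Complex.norm_exp]

lemma hasFDerivAt_planeWave (ζ y : Fin d → ℝ) :
    HasFDerivAt (planeWave ζ) (planeWave ζ y •
      -(Complex.I • Complex.ofRealCLM.comp (∑ i, ζ i • ContinuousLinearMap.proj i))) y := by
  have hdotp : HasFDerivAt (fun y : Fin d → ℝ => (dotp y ζ : ℂ))
      (Complex.ofRealCLM.comp (∑ i, ζ i • ContinuousLinearMap.proj i)) y := by
    refine (ContinuousLinearMap.hasFDerivAt _).congr_of_eventuallyEq (.of_forall fun y => ?_)
    simp [dotp, mul_comm]
  exact (hdotp.const_mul Complex.I).fun_neg.cexp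

lemma continuous_planeWave (ζ : Fin d → ℝ) : Continuous (planeWave ζ) :=
  continuous_iff_continuousAt.2 fun y => (hasFDerivAt_planeWave ζ y).continuousAt

lemma dirDeriv_planeWave (ζ v y : Fin d → ℝ) :
    dirDeriv v (planeWave ζ) y = -(Complex.I * dotp v ζ) * planeWave ζ y := by
  simp [dirDeriv, (hasFDerivAt_planeWave ζ y).fderiv, dotp, mul_comm]

lemma integral_dirDeriv_mul_planeWave {f : (Fin d → ℝ) → ℂ} (hf : ContDiff ℝ 1 f)
    (hsupp : HasCompactSupport f) (v ζ : Fin d → ℝ) :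
    ∫ y, dirDeriv v f y * planeWave ζ y =
      Complex.I * dotp v ζ * ∫ y, f y * planeWave ζ y := by
  have hwave := continuous_planeWave ζ
  have hfwave : Integrable fun y => f y * planeWave ζ y :=
    (hf.continuous.mul hwave).integrable_of_hasCompactSupport hsupp.mul_right
  have hf'wave : Integrable fun y => dirDeriv v f y * planeWave ζ y :=
    (((hf.continuous_fderiv one_ne_zero).clm_apply continuous_const).mul
      hwave).integrable_of_hasCompactSupport (hsupp.fderiv_apply ℝ v).mul_right
  have hwave' (y) : f y * dirDeriv v (planeWave ζ) y =
      -(Complex.I * dotp v ζ) * (f y * planeWave ζ y) := by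
    rw [dirDeriv_planeWave]; ring
  have hparts := integral_mul_fderiv_eq_neg_fderiv_mul_of_integrable (v := v) hf'wave
    ((hfwave.const_mul _).congr (.of_forall fun y => (hwave' y).symm)) hfwave
    (fun y _ => hf.differentiable one_ne_zero y)
    (fun y _ => (hasFDerivAt_planeWave ζ y).differentiableAt)
  change ∫ y, f y * dirDeriv v (planeWave ζ) y = -∫ y, dirDeriv v f y * planeWave ζ y at hparts
  simp only [hwave', integral_const_mul] at hparts
  linear_combination hparts

lemma integral_dirDerivList_replicate_mul_planeWave {f : (Fin d → ℝ) → ℂ} (hf : ContDiff ℝ ∞ f)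
    (hsupp : HasCompactSupport f) (v ζ : Fin d → ℝ) (N : ℕ) :
    ∫ y, dirDerivList (List.replicate N v) f y * planeWave ζ y =
      (Complex.I * dotp v ζ) ^ N * ∫ y, f y * planeWave ζ y := by
  induction N with
  | zero => simp [dirDerivList]
  | succ N ih =>
    have hsupp' : HasCompactSupport (dirDerivList (List.replicate N v) f) :=
      hsupp.mono' (subset_closure.trans (tsupport_dirDerivList_subset _ f))
    rw [List.replicate_succ, dirDerivList, integral_dirDeriv_mul_planeWave
      ((contDiff_dirDerivList hf _).of_le (by simp)) hsupp', ih]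
    ring

lemma norm_integral_mul_planeWave_le {f : (Fin d → ℝ) → ℂ} {K : Set (Fin d → ℝ)}
    (hK : IsCompact K) {B : ℝ} (hB : ∀ y ∈ K, ‖f y‖ ≤ B) (hsupp : ∀ y ∉ K, f y = 0)
    (ζ : Fin d → ℝ) :
    ‖∫ y, f y * planeWave ζ y‖ ≤ B * volume.real K := by
  rw [← setIntegral_eq_integral_of_forall_compl_eq_zero fun y hy => by simp [hsupp y hy]]
  exact norm_setIntegral_le_of_norm_le_const hK.measure_lt_top fun y hy => by
    simpa [norm_planeWave] using hB y hy

end PlaneWaves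

section OscillatoryIntegrals

variable {d : ℕ} {Q : Type*}

lemma one_add_norm_pow_le (ζ : Fin d → ℝ) (N : ℕ) :
    (1 + ‖ζ‖) ^ N ≤ 2 ^ N * (1 + ∑ i, |ζ i| ^ N) := by
  rcases le_or_gt ‖ζ‖ 1 with hζ | hζ
  · have hsum : 0 ≤ ∑ i, |ζ i| ^ N := by positivity
    calc (1 + ‖ζ‖) ^ N ≤ 2 ^ N * 1 := by rw [mul_one]; gcongr; linarith
      _ ≤ _ := by gcongr; linarith
  · obtain ⟨i, hi⟩ : ∃ i, ‖ζ‖ ≤ |ζ i| := by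
      by_contra! h
      exact lt_irrefl _ ((pi_norm_lt_iff (by linarith)).2 h)
    calc (1 + ‖ζ‖) ^ N ≤ (2 * |ζ i|) ^ N := by gcongr; linarith
      _ = 2 ^ N * |ζ i| ^ N := mul_pow _ _ _
      _ ≤ 2 ^ N * ∑ i, |ζ i| ^ N := by
        gcongr
        exact Finset.single_le_sum (f := fun i => |ζ i| ^ N) (fun _ _ => by positivity)
          (Finset.mem_univ i)
      _ ≤ _ := by gcongr; linarith

/-- The Fourier-type integral `∫ e^{iψ(y, q)} g(y, q) e^{-i⟨y, ζ⟩} dy`, as a function of the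
parameter and the frequency `p = (q, ζ)`. -/
noncomputable def oscIntegral (ψ : (Fin d → ℝ) × Q → ℝ) (g : (Fin d → ℝ) × Q → ℂ)
    (p : Q × (Fin d → ℝ)) : ℂ :=
  ∫ y, Complex.exp (Complex.I * (ψ (y, p.1) : ℂ)) * g (y, p.1) * planeWave p.2 y

variable {K : Set (Fin d → ℝ)} {ψ : (Fin d → ℝ) × Q → ℝ} {g : (Fin d → ℝ) × Q → ℂ} {v w : Q → ℝ}

lemma isBigO_oscIntegral (hK : IsCompact K) (hg : g =O[𝓟 (K ×ˢ Set.univ)] fun x => w x.2)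
    (hsupp : Function.support g ⊆ K ×ˢ Set.univ) :
    oscIntegral ψ g =O[⊤] fun p => w p.1 := by
  obtain ⟨C, hC⟩ := hg.isBigOWith
  rw [isBigOWith_principal] at hC
  refine .of_bound (C * volume.real K) (eventually_top.2 fun p => ?_)
  rw [mul_right_comm]
  refine norm_integral_mul_planeWave_le hK (fun y hy => ?_) (fun y hy => ?_) p.2
  · simpa [Complex.norm_exp] using hC (y, p.1) ⟨hy, Set.mem_univ _⟩
  · have : g (y, p.1) = 0 := Function.notMem_support.1 fun h => hy (hsupp h).1
    simp [this]

variable [NormedAddCommGroup Q] [NormedSpace ℝ Q]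

lemma coord_pow_mul_oscIntegral (hK : IsCompact K) (hψ : ContDiff ℝ ∞ fun x => (ψ x : ℂ))
    (hg : ContDiff ℝ ∞ g) (hsupp : Function.support g ⊆ K ×ˢ Set.univ) (i : Fin d) (N : ℕ)
    (p : Q × (Fin d → ℝ)) :
    (Complex.I * p.2 i) ^ N * oscIntegral ψ g p =
      oscIntegral ψ (oscAmplitude (fun x => (ψ x : ℂ)) g ((List.replicate N i).map baseDir)) p := by
  let F : (Fin d → ℝ) × Q → ℂ := fun x => Complex.exp (Complex.I * ψ x) * g x
  have hF : ContDiff ℝ ∞ F := (contDiff_const.mul hψ).cexp.mul hg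
  have hslice : HasCompactSupport (F ∘ fun y => (y, p.1)) := .intro hK fun y hy => by
    have : g (y, p.1) = 0 := Function.notMem_support.1 fun h => hy (hsupp h).1
    simp [F, this]
  have hderiv := dirDerivList_comp (hasFDerivAt_prodMk_left · p.1 |>.differentiableAt)
    (dirDeriv_prodMk_left · p.1) (j := id) hF (List.replicate N i)
  have hparts := integral_dirDerivList_replicate_mul_planeWave
    (hF.comp (contDiff_prodMk_left p.1)) hslice (Pi.single i 1) p.2 N
  rw [← List.map_replicate (f := fun i => Pi.single i 1), hderiv, List.map_id,
    dirDerivList_cexp_mul hψ hg] at hparts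
  simpa [oscIntegral, F, dotp, Pi.single_apply] using hparts.symm

lemma isBigO_coord_pow_mul_oscIntegral (hK : IsCompact K) (hv : ∀ q, 1 ≤ v q)
    (hψ : IsUniformlySmoothOn K v fun x => (ψ x : ℂ)) (hg : IsUniformlySmoothOn K w g)
    (hsupp : Function.support g ⊆ K ×ˢ Set.univ) (i : Fin d) (N : ℕ) :
    (fun p => |p.2 i| ^ N * ‖oscIntegral ψ g p‖) =O[⊤] fun p => w p.1 * v p.1 ^ N := by
  have hA : IsUniformlySmoothOn K (fun q => w q * v q ^ N)
      (oscAmplitude (fun x => (ψ x : ℂ)) g ((List.replicate N i).map baseDir)) := by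
    refine (HasDerivBounds.oscAmplitude (v := fun x => v x.2)
      (fun i _ => (hψ.dirDeriv i).congr_weight fun x => mul_one _)
      (fun _ _ => .of_norm_le fun x => ?_) hg).congr_weight fun x => by simp
    simpa using hv x.2
  have hsuppA := (support_oscAmplitude_subset hψ.contDiff hg.contDiff
    ((List.replicate N i).map baseDir)).trans
      (closure_minimal hsupp (hK.isClosed.prod isClosed_univ))
  refine (isBigO_oscIntegral (ψ := ψ) (w := fun q => w q * v q ^ N) hK hA.isBigO_self
    hsuppA).norm_left.congr_left fun p => ?_
  rw [← coord_pow_mul_oscIntegral hK hψ.contDiff hg.contDiff hsupp]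
  simp

lemma isBigO_one_add_norm_pow_mul_oscIntegral (hK : IsCompact K) (hv : ∀ q, 1 ≤ v q)
    (hψ : IsUniformlySmoothOn K v fun x => (ψ x : ℂ)) (hg : IsUniformlySmoothOn K w g)
    (hsupp : Function.support g ⊆ K ×ˢ Set.univ) (N : ℕ) :
    (fun p => (1 + ‖p.2‖) ^ N * ‖oscIntegral ψ g p‖) =O[⊤] fun p => w p.1 * v p.1 ^ N := by
  have hconst : (fun p => ‖oscIntegral ψ g p‖) =O[⊤] fun p => w p.1 * v p.1 ^ N := by
    refine (isBigO_oscIntegral hK hg.isBigO_self hsupp).norm_left.trans (isBigO_of_le _ fun p => ?_)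
    rw [norm_mul, Real.norm_of_nonneg (pow_nonneg (zero_le_one.trans (hv p.1)) N)]
    exact le_mul_of_one_le_right (norm_nonneg _) (one_le_pow₀ (hv p.1))
  have hcoords := IsBigO.sum fun i (_ : i ∈ Finset.univ) =>
    isBigO_coord_pow_mul_oscIntegral hK hv hψ hg hsupp i N
  refine IsBigO.trans (.of_norm_le fun p => ?_) ((hconst.add hcoords).const_mul_left (2 ^ N))
  rw [Real.norm_of_nonneg (by positivity)]
  refine (mul_le_mul_of_nonneg_right (one_add_norm_pow_le p.2 N) (norm_nonneg _)).trans_eq ?_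
  simp only [Finset.sum_apply, ← Finset.sum_mul]
  ring

end OscillatoryIntegrals

section Weights

variable {E : Type*} [SeminormedAddCommGroup E]

lemma peetre_inequality (s : ℝ) (ξ σ : E) :
    (1 + ‖σ‖) ^ s ≤ (1 + ‖ξ‖) ^ s * (1 + ‖ξ - σ‖) ^ |s| := by
  have hmul (η η' : E) : 1 + ‖η‖ ≤ (1 + ‖η'‖) * (1 + ‖η - η'‖) := by
    nlinarith [norm_le_norm_add_norm_sub' η η', mul_nonneg (norm_nonneg η') (norm_nonneg (η - η'))]
  rcases le_total 0 s with hs | hs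
  · rw [abs_of_nonneg hs, ← Real.mul_rpow (by positivity) (by positivity), norm_sub_rev]
    exact Real.rpow_le_rpow (by positivity) (hmul σ ξ) hs
  · rw [abs_of_nonpos hs, Real.rpow_neg (by positivity), ← div_eq_mul_inv,
      ← Real.div_rpow (by positivity) (by positivity)]
    refine Real.rpow_le_rpow_of_nonpos (by positivity) ?_ hs
    rw [div_le_iff₀ (by positivity)]
    exact hmul ξ σ

lemma one_add_norm_rpow_le_of_half_norm_le (s : ℝ) {ξ ζ : E} (h : ‖ξ‖ / 2 ≤ ‖ζ‖) :
    (1 + ‖ξ‖) ^ s ≤ 2 ^ |s| * (1 + ‖ζ‖) ^ |s| := by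
  rw [← Real.mul_rpow (by positivity) (by positivity)]
  calc (1 + ‖ξ‖) ^ s ≤ (1 + ‖ξ‖) ^ |s| :=
        Real.rpow_le_rpow_of_exponent_le (by simp) (le_abs_self s)
    _ ≤ (2 * (1 + ‖ζ‖)) ^ |s| := by gcongr; linarith

end Weights

lemma abs_mpow_le {d : ℕ} (ζ : Fin d → ℝ) (α : Fin d → ℕ) : |mpow ζ α| ≤ (1 + ‖ζ‖) ^ mOrder α := by
  rw [mpow, mOrder, Finset.abs_prod, ← Finset.prod_pow_eq_pow_sum]
  gcongr with i
  rw [abs_pow]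
  gcongr
  exact (norm_le_pi_norm ζ i).trans (by simp)

section PairingOfSymbols

variable {d : ℕ} {K : Set (Fin d → ℝ)} {r m μ : ℝ} {Φ : (Fin d → ℝ) × (Fin d → ℝ) → ℝ}
  {b c : (Fin d → ℝ) × (Fin d → ℝ) → ℂ}

/-- The integral `∫ (e^{iΦ} b)(y, ξ) conj((e^{iΦ} c)(y, σ)) e^{-i⟨y, ζ⟩} dy`, as a function of
`((ξ, σ), ζ)`. -/
noncomputable def oscPairing (Φ : (Fin d → ℝ) × (Fin d → ℝ) → ℝ)
    (b c : (Fin d → ℝ) × (Fin d → ℝ) → ℂ) :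
    ((Fin d → ℝ) × (Fin d → ℝ)) × (Fin d → ℝ) → ℂ :=
  oscIntegral (fun x => Φ (x.1, x.2.1) - Φ (x.1, x.2.2))
    fun x => b (x.1, x.2.1) * (starRingEnd ℂ) (c (x.1, x.2.2))

lemma isBigO_one_add_norm_pow_mul_oscPairing (hr : r ∈ Set.Icc (0 : ℝ) 1) (hK : IsCompact K)
    (hΦ : IsSymbolOn K r fun q => (Φ q : ℂ)) (hb : IsSymbolOn K m b) (hc : IsSymbolOn K μ c)
    (hsupp : ∀ y ∉ K, ∀ ξ, b (y, ξ) = 0) (N : ℕ) :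
    (fun p => (1 + ‖p.2‖) ^ N * ‖oscPairing Φ b c p‖) =O[⊤] fun p =>
      (1 + ‖p.1.1‖) ^ m * (1 + ‖p.1.2‖) ^ μ * ((1 + ‖p.1.1 - p.1.2‖) ^ r) ^ N := by
  have hphase : IsUniformlySmoothOn K (fun q => (1 + ‖q.1 - q.2‖) ^ r)
      fun x : (Fin d → ℝ) × (Fin d → ℝ) × (Fin d → ℝ) =>
        ((Φ (x.1, x.2.1) - Φ (x.1, x.2.2) : ℝ) : ℂ) := by
    simpa using hΦ.isUniformlySmoothOn_sub hr.1 hr.2 (.fst ℝ (Fin d → ℝ) (Fin d → ℝ))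
      (.snd ℝ (Fin d → ℝ) (Fin d → ℝ))
  have hampl : IsUniformlySmoothOn K (fun q => (1 + ‖q.1‖) ^ m * (1 + ‖q.2‖) ^ μ)
      fun x : (Fin d → ℝ) × (Fin d → ℝ) × (Fin d → ℝ) =>
        b (x.1, x.2.1) * (starRingEnd ℂ) (c (x.1, x.2.2)) :=
    (hb.isUniformlySmoothOn (.fst ℝ (Fin d → ℝ) (Fin d → ℝ))).mul
    ((hc.isUniformlySmoothOn (.snd ℝ (Fin d → ℝ) (Fin d → ℝ))).clm_comp
      (Complex.conjCLE : ℂ →L[ℝ] ℂ))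
  refine isBigO_one_add_norm_pow_mul_oscIntegral hK (fun q => ?_) hphase hampl
    (fun x hx => ?_) N
  · exact Real.one_le_rpow (by simp) hr.1
  · by_contra hK'
    exact hx (by simp [hsupp x.1 fun h => hK' ⟨h, Set.mem_univ _⟩])

lemma exists_norm_oscPairing_le (hr : r ∈ Set.Ico (0 : ℝ) 1) (hK : IsCompact K)
    (hΦ : IsSymbolOn K r fun q => (Φ q : ℂ)) (hb : IsSymbolOn K m b) (hc : IsSymbolOn K μ c)
    (hsupp : ∀ y ∉ K, ∀ ξ, b (y, ξ) = 0) (s : ℝ) :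
    ∃ C : ℝ, 0 ≤ C ∧ ∀ ξ σ ζ : Fin d → ℝ, ‖ξ - σ‖ ≤ ‖ζ‖ →
      ‖oscPairing Φ b c ((ξ, σ), ζ)‖ ≤ C * (1 + ‖ξ‖) ^ (m + μ) * (1 + ‖ζ‖) ^ (-s) := by
  obtain ⟨N, hN⟩ := exists_nat_ge ((s + |μ|) / (1 - r))
  have hexp : |μ| + r * N ≤ N - s := by
    rw [div_le_iff₀ (by linarith [hr.2])] at hN
    linarith
  obtain ⟨C, hC₀, hC⟩ := (isBigO_one_add_norm_pow_mul_oscPairing ⟨hr.1, hr.2.le⟩ hK hΦ hb hc hsupp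
    N).exists_nonneg
  refine ⟨C, hC₀, fun ξ σ ζ hζ => ?_⟩
  have hpos : 0 < 1 + ‖ζ‖ := by positivity
  have hcost : (1 + ‖ξ - σ‖) ^ |μ| * ((1 + ‖ξ - σ‖) ^ r) ^ N ≤ (1 + ‖ζ‖) ^ (N - s) := by
    rw [← Real.rpow_mul_natCast (by positivity), ← Real.rpow_add (by positivity)]
    calc (1 + ‖ξ - σ‖) ^ (|μ| + r * N) ≤ (1 + ‖ζ‖) ^ (|μ| + r * N) := by
          have := hr.1
          gcongr
      _ ≤ (1 + ‖ζ‖) ^ (N - s) := Real.rpow_le_rpow_of_exponent_le (by simp) hexp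
  have hbound := (isBigOWith_top.1 hC) ((ξ, σ), ζ)
  rw [Real.norm_of_nonneg (by positivity), Real.norm_of_nonneg (by positivity)] at hbound
  refine le_of_mul_le_mul_left (hbound.trans ?_) (pow_pos hpos N)
  calc C * ((1 + ‖ξ‖) ^ m * (1 + ‖σ‖) ^ μ * ((1 + ‖ξ - σ‖) ^ r) ^ N)
      ≤ C * ((1 + ‖ξ‖) ^ m * ((1 + ‖ξ‖) ^ μ * (1 + ‖ξ - σ‖) ^ |μ|) * ((1 + ‖ξ - σ‖) ^ r) ^ N) := by
        gcongr
        exact peetre_inequality μ ξ σ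
    _ = C * (1 + ‖ξ‖) ^ (m + μ) * ((1 + ‖ξ - σ‖) ^ |μ| * ((1 + ‖ξ - σ‖) ^ r) ^ N) := by
        rw [Real.rpow_add (by positivity)]; ring
    _ ≤ C * (1 + ‖ξ‖) ^ (m + μ) * (1 + ‖ζ‖) ^ (N - s) := by gcongr
    _ = (1 + ‖ζ‖) ^ N * (C * (1 + ‖ξ‖) ^ (m + μ) * (1 + ‖ζ‖) ^ (-s)) := by
        rw [sub_eq_add_neg, Real.rpow_add hpos, Real.rpow_natCast]; ring

lemma integral_mul_conj_mpderiv_eq_oscPairing (hΦ : ContDiff ℝ ∞ fun q => (Φ q : ℂ))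
    (hc : ContDiff ℝ ∞ c) (α : Fin d → ℕ) (ξ σ ζ : Fin d → ℝ) :
    ∫ y, Complex.exp (Complex.I * (Φ (y, ξ) : ℂ)) * b (y, ξ) * (starRingEnd ℂ)
        (mpderiv α (fun η => Complex.exp (Complex.I * (Φ (y, η) : ℂ)) * c (y, η)) σ) *
        Complex.exp (-(Complex.I * (dotp y ζ : ℂ))) =
      oscPairing Φ b (oscAmplitude (fun q => (Φ q : ℂ)) c
        (((multiIndexWord α).map Sum.inr).map symbolDir)) ((ξ, σ), ζ) := by
  refine integral_congr_ae (.of_forall fun y => ?_)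
  have hslice := mpderiv_slice ((contDiff_const.mul hΦ).cexp.mul hc :
    ContDiff ℝ ∞ fun q => Complex.exp (Complex.I * (Φ q : ℂ)) * c q) α y σ
  have hphase : Complex.exp (Complex.I * ((Φ (y, ξ) - Φ (y, σ) : ℝ) : ℂ)) =
      Complex.exp (Complex.I * (Φ (y, ξ) : ℂ)) *
        (starRingEnd ℂ) (Complex.exp (Complex.I * (Φ (y, σ) : ℂ))) := by
    rw [← Complex.exp_conj, ← Complex.exp_add]
    simp [mul_sub, ← sub_eq_add_neg]
  simp only [hslice, dirDerivList_cexp_mul hΦ hc, hphase, map_mul, planeWave]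
  ring

end PairingOfSymbols

lemma exists_bounds_of_forall_exists_le_mul_rpow {E F : Type*} [SeminormedAddCommGroup E]
    [SeminormedAddCommGroup F] {v : E → E → ℝ → F} {T : Set ℝ} {M : ℝ}
    (h : ∀ s : ℝ, ∃ C : ℝ, 0 ≤ C ∧ ∀ t ∈ T, ∀ ξ ζ : E,
      ‖v ξ ζ t‖ ≤ C * (1 + ‖ξ‖) ^ M * (1 + ‖ζ‖) ^ (-s)) :
    (∃ C : ℝ, ∀ t ∈ T, ∀ ξ ζ : E, ‖v ξ ζ t‖ ≤ C * (1 + ‖ξ‖) ^ M) ∧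
    (∀ n : ℕ, ∃ C : ℝ, ∀ t ∈ T, ∀ ξ ζ : E, ‖ξ‖ / 2 ≤ ‖ζ‖ →
      ‖v ξ ζ t‖ ≤ C * (1 + ‖ζ‖) ^ (-(n : ℝ))) := by
  refine ⟨?_, fun n => ?_⟩
  · obtain ⟨C, -, hC⟩ := h 0
    exact ⟨C, fun t ht ξ ζ => by simpa using hC t ht ξ ζ⟩
  · obtain ⟨C, hC₀, hC⟩ := h (n + |M|)
    refine ⟨C * 2 ^ |M|, fun t ht ξ ζ hζ => (hC t ht ξ ζ).trans ?_⟩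
    calc C * (1 + ‖ξ‖) ^ M * (1 + ‖ζ‖) ^ (-(n + |M|))
        ≤ C * (2 ^ |M| * (1 + ‖ζ‖) ^ |M|) * (1 + ‖ζ‖) ^ (-(n + |M|)) := by
          gcongr
          exact one_add_norm_rpow_le_of_half_norm_le M hζ
      _ = C * 2 ^ |M| * (1 + ‖ζ‖) ^ (-(n : ℝ)) := by
          rw [← mul_assoc C, mul_assoc (C * _), ← Real.rpow_add (by positivity)]
          congr 2
          ring

theorem statement7_general {d : ℕ} (r m₁ m₂ : ℝ) (hr : r ∈ Set.Ico (0 : ℝ) 1)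
    (Φ : (Fin d → ℝ) → (Fin d → ℝ) → ℝ)
    (b₁ b₂ : (Fin d → ℝ) → (Fin d → ℝ) → ℂ)
    (hΦ : IsSymbol Set.univ r 1 0 fun x ξ => ((Φ x ξ : ℝ) : ℂ))
    (hb₁ : IsSymbol Set.univ m₁ 1 0 b₁)
    (hb₂ : IsSymbol Set.univ m₂ 1 0 b₂)
    (a₁ a₂ : (Fin d → ℝ) → (Fin d → ℝ) → ℂ)
    (ha₁ : a₁ = fun x ξ => Complex.exp (Complex.I * (Φ x ξ : ℂ)) * b₁ x ξ)
    (ha₂ : a₂ = fun x ξ => Complex.exp (Complex.I * (Φ x ξ : ℂ)) * b₂ x ξ)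
    (K₀ : Set (Fin d → ℝ)) (hK₀ : IsCompact K₀)
    (hsupp : ∀ x ∉ K₀, ∀ ξ : Fin d → ℝ, a₁ x ξ = 0)
    (α : Fin d → ℕ)
    (v : (Fin d → ℝ) → (Fin d → ℝ) → ℝ → ℂ)
    (hv : v = fun ξ ζ t => (mpow ζ α : ℂ) *
      ∫ y : Fin d → ℝ, a₁ y ξ *
        (starRingEnd ℂ) (mpderiv α (fun η => a₂ y η) (ξ + t • ζ)) *
        Complex.exp (-(Complex.I * (dotp y ζ : ℂ)))) :
    ∀ s : ℝ, ∃ C : ℝ, 0 ≤ C ∧ ∀ t ∈ Set.Icc (0 : ℝ) 1, ∀ ξ ζ : Fin d → ℝ,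
      ‖v ξ ζ t‖ ≤
        C * (1 + ‖ξ‖) ^ (m₁ + m₂ - (mOrder α : ℝ) * (1 - r)) * (1 + ‖ζ‖) ^ (-s) := by
  intro s
  have hΦK := hΦ.isSymbolOn hK₀
  have hb₂K := hb₂.isSymbolOn hK₀
  have hb₁supp (y) (hy : y ∉ K₀) (ξ : Fin d → ℝ) : b₁ y ξ = 0 := by
    simpa [ha₁] using hsupp y hy ξ
  obtain ⟨C, hC₀, hC⟩ := exists_norm_oscPairing_le hr hK₀ hΦK (hb₁.isSymbolOn hK₀)
    (IsSymbolOn.oscAmplitude_inr hr.1 hΦK hb₂K (multiIndexWord α)) hb₁supp (s + mOrder α)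
  rw [length_multiIndexWord, ← add_sub_assoc] at hC
  refine ⟨C, hC₀, fun t ht ξ ζ => ?_⟩
  have hshift : ‖ξ - (ξ + t • ζ)‖ ≤ ‖ζ‖ := by
    simpa [norm_smul, abs_of_nonneg ht.1] using mul_le_of_le_one_left (norm_nonneg ζ) ht.2
  simp only [hv, ha₁, ha₂]
  rw [integral_mul_conj_mpderiv_eq_oscPairing (Φ := fun q => Φ q.1 q.2) (b := fun q => b₁ q.1 q.2)
    (c := fun q => b₂ q.1 q.2) hΦK.contDiff hb₂K.contDiff, norm_mul, Complex.norm_real,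
    Real.norm_eq_abs]
  refine (mul_le_mul (abs_mpow_le ζ α) (hC ξ _ ζ hshift) (norm_nonneg _)
    (by positivity)).trans_eq ?_
  rw [neg_add, Real.rpow_add (by positivity), Real.rpow_neg (by positivity) (mOrder α : ℝ),
    Real.rpow_natCast]
  field_simp

/-- estimates (2.24)/(2.25) and Lemma 2.8 / `ha2`: the function
`v_α(ξ,ζ;t) = ζ^α ∫ a₁(y,ξ) conj((∂_ξ^α a₂)(y,ξ+tζ)) e^{-i⟨y,ζ⟩} dy` is
`O((1+|ξ|)^{m-|α|(1-r)})` for `|ζ| ≤ |ξ|/2` and rapidly decaying for `|ζ| ≥ |ξ|/2`. -/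
theorem statement7 {d : ℕ} (r m₁ m₂ : ℝ) (hr : r ∈ Set.Ico (0 : ℝ) 1)
    (Φ : (Fin d → ℝ) → (Fin d → ℝ) → ℝ)
    (b₁ b₂ : (Fin d → ℝ) → (Fin d → ℝ) → ℂ)
    (hΦ : IsSymbol Set.univ r 1 0 fun x ξ => ((Φ x ξ : ℝ) : ℂ))
    (hb₁ : IsSymbol Set.univ m₁ 1 0 b₁)
    (hb₂ : IsSymbol Set.univ m₂ 1 0 b₂)
    (a₁ a₂ : (Fin d → ℝ) → (Fin d → ℝ) → ℂ)
    (ha₁ : a₁ = fun x ξ => Complex.exp (Complex.I * (Φ x ξ : ℂ)) * b₁ x ξ)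
    (ha₂ : a₂ = fun x ξ => Complex.exp (Complex.I * (Φ x ξ : ℂ)) * b₂ x ξ)
    (K₀ : Set (Fin d → ℝ)) (hK₀ : IsCompact K₀)
    (hsupp : ∀ x ∉ K₀, ∀ ξ : Fin d → ℝ, a₁ x ξ = 0 ∧ a₂ x ξ = 0)
    (α : Fin d → ℕ)
    (v : (Fin d → ℝ) → (Fin d → ℝ) → ℝ → ℂ)
    (hv : v = fun ξ ζ t => (mpow ζ α : ℂ) *
      ∫ y : Fin d → ℝ, a₁ y ξ *
        (starRingEnd ℂ) (mpderiv α (fun η => a₂ y η) (ξ + t • ζ)) *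
        Complex.exp (-(Complex.I * (dotp y ζ : ℂ)))) :
    (∃ C : ℝ, ∀ t ∈ Set.Icc (0 : ℝ) 1, ∀ ξ ζ : Fin d → ℝ, ‖ζ‖ ≤ ‖ξ‖ / 2 →
      ‖v ξ ζ t‖ ≤ C * (1 + ‖ξ‖) ^ (m₁ + m₂ - (mOrder α : ℝ) * (1 - r))) ∧
    (∀ n : ℕ, ∃ Cn : ℝ, ∀ t ∈ Set.Icc (0 : ℝ) 1, ∀ ξ ζ : Fin d → ℝ, ‖ξ‖ / 2 ≤ ‖ζ‖ →
      ‖v ξ ζ t‖ ≤ Cn * (1 + ‖ζ‖) ^ (-(n : ℝ))) := by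
  obtain ⟨hnear, hfar⟩ := exists_bounds_of_forall_exists_le_mul_rpow
    (statement7_general r m₁ m₂ hr Φ b₁ b₂ hΦ hb₁ hb₂ a₁ a₂ ha₁ ha₂ K₀ hK₀
      (fun x hx ξ => (hsupp x hx ξ).1) α v hv)
  exact ⟨hnear.imp fun C hC t ht ξ ζ _ => hC t ht ξ ζ, hfar⟩
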